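/- Fix β > 0, d ≥ 1, s ≥ 0 and u ≥ ℓ ≥ 0, and suppose f ∈ A(s, ℓ, u). Then for all R > 0 and all p ≥ p_C(s, ℓ) there exists a constant L_C = L_C(p, R) > 0 such that for all probability measures μ, ν ∈ P_{p,R}(ℝ^d), ‖C_β(μ) − C_β(ν)‖_F ≤ L_C · W_p(μ, ν). -/

import Mathlib

open MeasureTheory ENNReal
open scoped NNReal

noncomputable section

/-- Euclidean space `ℝ^d`. -/
abbrev Rd (d : ℕ) := EuclideanSpace ℝ (Fin d)

/-- The weight function `x ↦ exp (-β f x)`. -/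
def wFn (β : ℝ) {d : ℕ} (f : Rd d → ℝ) (x : Rd d) : ℝ := Real.exp (-β * f x)

/-- The weighted mean `M_β(μ) = (∫ x e^{-β f x} dμ) / (∫ e^{-β f x} dμ)`. -/
def wMean (β : ℝ) {d : ℕ} (f : Rd d → ℝ) (μ : Measure (Rd d)) : Rd d :=
  (∫ x, wFn β f x ∂μ)⁻¹ • ∫ x, wFn β f x • x ∂μ

/-- The weighted covariance `C_β(μ)`, a `d × d` matrix. -/
def wCov (β : ℝ) {d : ℕ} (f : Rd d → ℝ) (μ : Measure (Rd d)) :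
    Matrix (Fin d) (Fin d) ℝ := fun i j =>
  (∫ x, wFn β f x ∂μ)⁻¹ *
    ∫ x, wFn β f x * ((x i - wMean β f μ i) * (x j - wMean β f μ j)) ∂μ

/-- Frobenius norm of a matrix. -/
def frobNorm {m n : ℕ} (A : Matrix (Fin m) (Fin n) ℝ) : ℝ :=
  Real.sqrt (∑ i, ∑ j, (A i j) ^ 2)

/-- `S` is the (unique) positive semidefinite square root of `A`. -/
def IsPSDSqrt {d : ℕ} (S A : Matrix (Fin d) (Fin d) ℝ) : Prop :=
  S.PosSemidef ∧ S * S = A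

/-- `μ ∈ P_{p,R}`: the `p`-th moment of `μ` is bounded, `(∫ |x|^p dμ)^{1/p} ≤ R`. -/
def MomLE (p R : ℝ) {d : ℕ} (μ : Measure (Rd d)) : Prop :=
  ∫⁻ x, (‖x‖₊ : ℝ≥0∞) ^ p ∂μ ≤ ENNReal.ofReal (R ^ p)

/-- `μ ∈ P_p`: the `p`-th moment of `μ` is finite. -/
def MomFin (p : ℝ) {d : ℕ} (μ : Measure (Rd d)) : Prop :=
  ∫⁻ x, (‖x‖₊ : ℝ≥0∞) ^ p ∂μ < ⊤

/-- The Wasserstein-`p` distance between two probability measures on `ℝ^d`: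
the infimum over couplings `π` of `μ` and `ν` of `(∬ |x - y|^p dπ)^{1/p}`. -/
def Wp (p : ℝ) {d : ℕ} (μ ν : Measure (Rd d)) : ℝ :=
  (sInf {c : ℝ≥0∞ | ∃ π : Measure (Rd d × Rd d),
      π.map Prod.fst = μ ∧ π.map Prod.snd = ν ∧
      c = (∫⁻ z, (‖z.1 - z.2‖₊ : ℝ≥0∞) ^ p ∂π) ^ (1 / p)}).toReal

/-- `f_* = inf f`. -/
def fStar {d : ℕ} (f : Rd d → ℝ) : ℝ := sInf (Set.range f)

/-- The class `A(s, ℓ, u)` of objective functions: `f` is bounded from below,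
locally Lipschitz with growth exponent `s`, and `f - inf f` grows at least like
`|x|^ℓ` and at most like `|x|^u`. -/
structure ClassA {d : ℕ} (s ℓ u : ℝ) (f : Rd d → ℝ) : Prop where
  bddBelow : BddBelow (Set.range f)
  lip : ∃ Lf > 0, ∀ x y : Rd d, |f x - f y| ≤ Lf * (1 + ‖x‖ + ‖y‖) ^ s * ‖x - y‖
  growth_lower : ∃ cl > 0, ∃ Cl > 0, ∀ x : Rd d, cl * ‖x‖ ^ ℓ - Cl ≤ f x - fStar f
  growth_upper : ∃ cu > 0, ∃ Cu > 0, ∀ x : Rd d, f x - fStar f ≤ cu * ‖x‖ ^ u + Cu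

/-- `p_M(s, ℓ) = s + 2` if `ℓ = 0`, and `1` if `ℓ > 0`. -/
def pM (s ℓ : ℝ) : ℝ := if ℓ = 0 then s + 2 else 1

/-- `p_C(s, ℓ) = s + 3` if `ℓ = 0`, and `1` if `ℓ > 0`. -/
def pC (s ℓ : ℝ) : ℝ := if ℓ = 0 then s + 3 else 1

/-!
`C_β(μ)` is the covariance of the coordinates under the tilted measure proportional to `e^{-βf} μ`,
so its entries are polynomials in the quotients `∫ e^{-βf} g ∂μ / ∫ e^{-βf} ∂μ`, where `g` is a
monomial of degree one or two. The weight decays fast enough (or `p` is large enough) that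
`e^{-βf} g` has a local Lipschitz constant growing like `|x|^{p-1}`, and Hölder's inequality on a
coupling then makes `∫ e^{-βf} g ∂μ` Lipschitz in `W_p` on sets of bounded `p`-th moment. The
denominators stay away from zero on such sets: by Markov's inequality half of the mass of `μ` lies
in a fixed ball, on which the continuous weight has a positive minimum.
-/

open Real (exp)
open scoped ProbabilityTheory

section Exponential

theorem abs_exp_sub_exp_le (a b : ℝ) : |exp a - exp b| ≤ |a - b| * (exp a + exp b) := by
  wlog h : b ≤ a generalizing a b
  · rw [abs_sub_comm, abs_sub_comm a b, add_comm]
    exact this b a (le_of_not_ge h)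
  have hexp : exp b = exp a * exp (b - a) := by rw [← Real.exp_add, add_sub_cancel]
  rw [abs_of_nonneg (sub_nonneg.2 (Real.exp_le_exp.2 h)), abs_of_nonneg (sub_nonneg.2 h)]
  calc exp a - exp b = exp a * (1 - exp (b - a)) := by rw [hexp]; ring
    _ ≤ exp a * (a - b) :=
        mul_le_mul_of_nonneg_left (by linarith [Real.add_one_le_exp (b - a)]) (Real.exp_pos a).le
    _ ≤ (a - b) * (exp a + exp b) := by nlinarith [Real.exp_pos b]

theorem rpow_le_div_rpow_mul_exp {a b t : ℝ} (ha : 0 < a) (hb : 0 < b) (ht : 0 ≤ t) :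
    t ^ b ≤ (b / a) ^ b * exp (a * t) := by
  calc t ^ b = (b / a * (a * t / b)) ^ b := by congr 1; field_simp
    _ = (b / a) ^ b * (a * t / b) ^ b := Real.mul_rpow (by positivity) (by positivity)
    _ ≤ (b / a) ^ b * exp (a * t / b) ^ b := by
        gcongr; linarith [Real.add_one_le_exp (a * t / b)]
    _ = (b / a) ^ b * exp (a * t) := by rw [← Real.exp_mul, div_mul_cancel₀ _ hb.ne']

theorem exists_one_add_rpow_le_mul_exp_rpow {a ℓ m : ℝ} (ha : 0 < a) (hℓ : 0 < ℓ) (hm : 0 < m) :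
    ∃ C > 0, ∀ r : ℝ, 0 ≤ r → (1 + r) ^ m ≤ C * exp (a * r ^ ℓ) := by
  set C := (ℓ⁻¹ / (a / m)) ^ ℓ⁻¹
  have : 0 < C := by positivity
  refine ⟨(1 + C) ^ m, by positivity, fun r hr => ?_⟩
  have hone : 1 ≤ exp (a / m * r ^ ℓ) := Real.one_le_exp (by positivity)
  have hr_le : r ≤ C * exp (a / m * r ^ ℓ) := by
    calc r = (r ^ ℓ) ^ ℓ⁻¹ := (Real.rpow_rpow_inv hr hℓ.ne').symm
      _ ≤ C * exp (a / m * r ^ ℓ) :=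
          rpow_le_div_rpow_mul_exp (by positivity) (by positivity) (by positivity)
  calc (1 + r) ^ m ≤ ((1 + C) * exp (a / m * r ^ ℓ)) ^ m := by gcongr; linarith
    _ = (1 + C) ^ m * exp (a * r ^ ℓ) := by
        rw [Real.mul_rpow (by positivity) (by positivity), ← Real.exp_mul]
        congr 2
        field_simp

end Exponential

section PolyLipschitz

variable {E F : Type*} [NormedAddCommGroup E] [NormedAddCommGroup F]

/-- `h` is locally Lipschitz with a constant growing like the `r`-th power of the norm. This is the
Lipschitz condition in the class `A(s, ℓ, u)`, and with `r = p - 1` it is the regularity for which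
`μ ↦ ∫ h ∂μ` is Lipschitz in `W_p` on sets of bounded `p`-th moment. -/
def PolyLipschitzWith (K : ℝ≥0) (r : ℝ) (h : E → F) : Prop :=
  ∀ x y, ‖h x - h y‖ ≤ K * (1 + ‖x‖ + ‖y‖) ^ r * ‖x - y‖

/-- The normalized test functions of growth degree `m` against which weighted averages are
estimated: both their size and their local Lipschitz constant grow at most like the `m`-th power of
the norm. -/
structure HasPolyGrowth (m : ℝ) (g : E → ℝ) : Prop where
  abs_le : ∀ x, |g x| ≤ (1 + ‖x‖) ^ m
  polyLipschitzWith : PolyLipschitzWith 1 m g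

theorem PolyLipschitzWith.continuous {K : ℝ≥0} {r : ℝ} {h : E → F} (hh : PolyLipschitzWith K r h) :
    Continuous h := by
  refine continuous_iff_continuousAt.2 fun x => tendsto_iff_norm_sub_tendsto_zero.2 ?_
  have hpow : Continuous fun y : E => (1 + ‖y‖ + ‖x‖) ^ r :=
    Continuous.rpow_const (by fun_prop) fun y => Or.inl (by positivity)
  have hbound : Continuous fun y : E => K * (1 + ‖y‖ + ‖x‖) ^ r * ‖y - x‖ := by fun_prop
  refine squeeze_zero (fun y => norm_nonneg _) (fun y => hh y x) ?_
  simpa using hbound.tendsto x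

theorem PolyLipschitzWith.const_mul {K : ℝ≥0} {r : ℝ} {φ : E → ℝ} (hφ : PolyLipschitzWith K r φ)
    (c : ℝ) : PolyLipschitzWith (‖c‖₊ * K) r fun x => c * φ x := fun x y => by
  rw [← mul_sub, norm_mul, NNReal.coe_mul, coe_nnnorm, mul_assoc, mul_assoc, ← mul_assoc (K : ℝ)]
  gcongr
  exact hφ x y

theorem PolyLipschitzWith.enorm_sub_le {K : ℝ≥0} {r : ℝ} {h : E → F}
    (hh : PolyLipschitzWith K r h) (hr : 0 ≤ r) (x y : E) :
    ‖h x - h y‖ₑ ≤ K * (1 + ‖x‖ₑ + ‖y‖ₑ) ^ r * ‖x - y‖ₑ := by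
  have hnn : ‖h x - h y‖₊ ≤ K * (1 + ‖x‖₊ + ‖y‖₊) ^ r * ‖x - y‖₊ := mod_cast hh x y
  simp only [enorm_eq_nnnorm]
  rw [← ENNReal.coe_one, ← ENNReal.coe_add, ← ENNReal.coe_add, ← ENNReal.coe_rpow_of_nonneg _ hr]
  exact mod_cast hnn

theorem HasPolyGrowth.mono {m m' : ℝ} {g : E → ℝ} (hg : HasPolyGrowth m g) (hm : m ≤ m') :
    HasPolyGrowth m' g where
  abs_le x := (hg.abs_le x).trans <|
    Real.rpow_le_rpow_of_exponent_le (by linarith [norm_nonneg x]) hm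
  polyLipschitzWith x y := (hg.polyLipschitzWith x y).trans <| by
    gcongr
    linarith [norm_nonneg x, norm_nonneg y]

theorem hasPolyGrowth_one : HasPolyGrowth 0 fun _ : E => (1 : ℝ) where
  abs_le x := by simp
  polyLipschitzWith x y := by simp

theorem hasPolyGrowth_coord {d : ℕ} (i : Fin d) : HasPolyGrowth 1 fun x : Rd d => x i where
  abs_le x := by
    rw [Real.rpow_one]
    linarith [PiLp.norm_apply_le x i, Real.norm_eq_abs (x i)]
  polyLipschitzWith x y := by
    rw [Real.rpow_one, NNReal.coe_one, one_mul]
    refine (PiLp.norm_apply_le (x - y) i).trans (le_mul_of_one_le_left (norm_nonneg _) ?_)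
    linarith [norm_nonneg x, norm_nonneg y]

theorem hasPolyGrowth_coord_mul_coord {d : ℕ} (i j : Fin d) :
    HasPolyGrowth 2 fun x : Rd d => x i * x j where
  abs_le x := by
    rw [abs_mul, Real.rpow_two, sq]
    exact mul_le_mul ((hasPolyGrowth_coord i).abs_le x |>.trans_eq (Real.rpow_one _))
      ((hasPolyGrowth_coord j).abs_le x |>.trans_eq (Real.rpow_one _)) (abs_nonneg _)
      (by positivity)
  polyLipschitzWith x y := by
    have hi : |x i - y i| ≤ ‖x - y‖ := PiLp.norm_apply_le (x - y) i
    have hj : |x j - y j| ≤ ‖x - y‖ := PiLp.norm_apply_le (x - y) j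
    have hxj : |x j| ≤ ‖x‖ := PiLp.norm_apply_le x j
    have hyi : |y i| ≤ ‖y‖ := PiLp.norm_apply_le y i
    calc ‖x i * x j - y i * y j‖ = |(x i - y i) * x j + y i * (x j - y j)| := by
          rw [Real.norm_eq_abs]; ring_nf
      _ ≤ |x i - y i| * |x j| + |y i| * |x j - y j| := by
          rw [← abs_mul, ← abs_mul]; exact abs_add_le _ _
      _ ≤ ‖x - y‖ * ‖x‖ + ‖y‖ * ‖x - y‖ := by gcongr
      _ ≤ (1 : ℝ≥0) * (1 + ‖x‖ + ‖y‖) ^ (2 : ℝ) * ‖x - y‖ := by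
          rw [Real.rpow_two, NNReal.coe_one, one_mul, mul_comm ‖x - y‖, ← add_mul]
          gcongr
          nlinarith [norm_nonneg x, norm_nonneg y]

theorem HasPolyGrowth.abs_le_one_add_add_rpow {m : ℝ} {g : E → ℝ} (hg : HasPolyGrowth m g)
    (hm : 0 ≤ m) (x y : E) : |g x| ≤ (1 + ‖x‖ + ‖y‖) ^ m :=
  (hg.abs_le x).trans <| Real.rpow_le_rpow (by positivity) (by linarith [norm_nonneg y]) hm

theorem norm_exp_mul_sub_exp_mul_le {L : ℝ≥0} {s m : ℝ} {φ g : E → ℝ}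
    (hφ : PolyLipschitzWith L s φ) (hg : HasPolyGrowth m g) (hs : 0 ≤ s) (hm : 0 ≤ m) (x y : E) :
    ‖exp (φ x) * g x - exp (φ y) * g y‖ ≤
      (L + 1) * (exp (φ x) + exp (φ y)) * (1 + ‖x‖ + ‖y‖) ^ (s + m) * ‖x - y‖ := by
  set T := 1 + ‖x‖ + ‖y‖
  have hT : 1 ≤ T := by linarith [norm_nonneg x, norm_nonneg y]
  have hexp : |exp (φ x) - exp (φ y)| ≤ L * T ^ s * ‖x - y‖ * (exp (φ x) + exp (φ y)) :=
    (abs_exp_sub_exp_le _ _).trans <| by gcongr; exact hφ x y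
  have hlip : |g x - g y| ≤ T ^ s * T ^ m * ‖x - y‖ :=
    (hg.polyLipschitzWith x y).trans <| by
      gcongr
      rw [NNReal.coe_one]
      exact Real.one_le_rpow hT hs
  calc ‖exp (φ x) * g x - exp (φ y) * g y‖
      = |(exp (φ x) - exp (φ y)) * g x + exp (φ y) * (g x - g y)| := by
        rw [Real.norm_eq_abs]; ring_nf
    _ ≤ |exp (φ x) - exp (φ y)| * |g x| + exp (φ y) * |g x - g y| := by
        refine (abs_add_le _ _).trans_eq ?_
        rw [abs_mul, abs_mul, Real.abs_exp]
    _ ≤ L * T ^ s * ‖x - y‖ * (exp (φ x) + exp (φ y)) * T ^ m +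
          (exp (φ x) + exp (φ y)) * (T ^ s * T ^ m * ‖x - y‖) := by
        gcongr
        · exact hg.abs_le_one_add_add_rpow hm x y
        · linarith [Real.exp_pos (φ x)]
    _ = (L + 1) * (exp (φ x) + exp (φ y)) * T ^ (s + m) * ‖x - y‖ := by
        rw [Real.rpow_add (by linarith)]; ring

theorem one_add_norm_add_norm_le_two_mul {x y : E} (hxy : ‖x - y‖ ≤ 1) :
    1 + ‖x‖ + ‖y‖ ≤ 2 * (1 + ‖x‖) := by
  linarith [norm_le_norm_add_norm_sub x y]

-- The growth hypothesis on the weight only controls nearby points: for `1 ≤ ‖x - y‖` the difference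
-- is bounded by the sum of the two sizes instead.
theorem PolyLipschitzWith.exp_mul {L B : ℝ≥0} {s m q : ℝ} {φ g : E → ℝ}
    (hφ : PolyLipschitzWith L s φ) (hg : HasPolyGrowth m g) (hs : 0 ≤ s) (hm : 0 ≤ m) (hq : 0 ≤ q)
    (hB : ∀ x, exp (φ x) * (1 + ‖x‖) ^ (s + m) ≤ B * (1 + ‖x‖) ^ q) :
    PolyLipschitzWith ((L + 1) * 2 ^ (s + m) * (2 * B)) q fun x => exp (φ x) * g x := by
  intro x y
  set T := 1 + ‖x‖ + ‖y‖
  have hxT : 1 + ‖x‖ ≤ T := by linarith [norm_nonneg y]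
  have hyT : 1 + ‖y‖ ≤ T := by linarith [norm_nonneg x]
  have hdecay : ∀ z : E, 1 + ‖z‖ ≤ T → exp (φ z) * (1 + ‖z‖) ^ (s + m) ≤ B * T ^ q :=
    fun z hz => (hB z).trans (by gcongr)
  push_cast
  rcases le_total ‖x - y‖ 1 with hnear | hfar
  · have hlocal : ∀ z : E, 1 + ‖z‖ ≤ T → T ≤ 2 * (1 + ‖z‖) →
        exp (φ z) * T ^ (s + m) ≤ 2 ^ (s + m) * (B * T ^ q) := fun z hz hTz => by
      calc exp (φ z) * T ^ (s + m) ≤ exp (φ z) * (2 * (1 + ‖z‖)) ^ (s + m) := by gcongr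
        _ = 2 ^ (s + m) * (exp (φ z) * (1 + ‖z‖) ^ (s + m)) := by
            rw [Real.mul_rpow (by positivity) (by positivity)]; ring
        _ ≤ 2 ^ (s + m) * (B * T ^ q) :=
            mul_le_mul_of_nonneg_left (hdecay z hz) (by positivity)
    have hx := hlocal x hxT (one_add_norm_add_norm_le_two_mul hnear)
    have hy := hlocal y hyT <| by
      have := one_add_norm_add_norm_le_two_mul (norm_sub_rev x y ▸ hnear)
      linarith
    calc ‖exp (φ x) * g x - exp (φ y) * g y‖
        ≤ (L + 1) * (exp (φ x) + exp (φ y)) * T ^ (s + m) * ‖x - y‖ :=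
          norm_exp_mul_sub_exp_mul_le hφ hg hs hm x y
      _ = (L + 1) * (exp (φ x) * T ^ (s + m) + exp (φ y) * T ^ (s + m)) * ‖x - y‖ := by ring
      _ ≤ (L + 1) * (2 ^ (s + m) * (B * T ^ q) + 2 ^ (s + m) * (B * T ^ q)) * ‖x - y‖ := by gcongr
      _ = (L + 1) * 2 ^ (s + m) * (2 * B) * T ^ q * ‖x - y‖ := by ring
  · have hsize : ∀ z : E, 1 + ‖z‖ ≤ T → |exp (φ z) * g z| ≤ B * T ^ q := fun z hz => by
      rw [abs_mul, Real.abs_exp]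
      refine le_trans ?_ (hdecay z hz)
      gcongr
      refine (hg.abs_le z).trans (Real.rpow_le_rpow_of_exponent_le ?_ (by linarith))
      linarith [norm_nonneg z]
    have hconst : 1 ≤ ((L : ℝ) + 1) * 2 ^ (s + m) :=
      one_le_mul_of_one_le_of_one_le (by simp) (Real.one_le_rpow one_le_two (by linarith))
    calc ‖exp (φ x) * g x - exp (φ y) * g y‖
        ≤ |exp (φ x) * g x| + |exp (φ y) * g y| := abs_sub _ _
      _ ≤ 1 * (2 * B) * T ^ q * 1 := by linarith [hsize x hxT, hsize y hyT]
      _ ≤ (L + 1) * 2 ^ (s + m) * (2 * B) * T ^ q * ‖x - y‖ := by gcongr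

end PolyLipschitz

section Coupling

variable {Ω E F : Type*} [MeasurableSpace Ω] {P : Measure Ω} {p : ℝ}
  [NormedAddCommGroup E] [NormedAddCommGroup F]

theorem eLpNorm_ofReal_eq_lintegral_rpow_enorm {ε : Type*} [ENorm ε] (hp : 0 < p) (X : Ω → ε) :
    eLpNorm X (.ofReal p) P = (∫⁻ ω, ‖X ω‖ₑ ^ p ∂P) ^ (1 / p) := by
  rw [eLpNorm_eq_lintegral_rpow_enorm_toReal (by simpa) ofReal_ne_top, toReal_ofReal hp.le]

theorem lintegral_rpow_sub_one_mul_le_eLpNorm {φ ψ : Ω → ℝ≥0∞} (hp : 1 ≤ p)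
    (hφ : AEMeasurable φ P) (hψ : AEMeasurable ψ P) :
    ∫⁻ ω, φ ω ^ (p - 1) * ψ ω ∂P ≤
      eLpNorm φ (.ofReal p) P ^ (p - 1) * eLpNorm ψ (.ofReal p) P := by
  have hp0 : 0 < p := by linarith
  have hholder := lintegral_mul_norm_pow_le (hφ.pow_const p) (hψ.pow_const p)
    (p := (p - 1) / p) (q := 1 / p) (div_nonneg (by linarith) hp0.le) (by positivity)
    (by field_simp; ring)
  rw [eLpNorm_ofReal_eq_lintegral_rpow_enorm hp0, eLpNorm_ofReal_eq_lintegral_rpow_enorm hp0,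
    ← ENNReal.rpow_mul, one_div_mul_eq_div]
  simpa only [← ENNReal.rpow_mul, mul_div_cancel₀ _ hp0.ne', ENNReal.rpow_one,
    enorm_eq_self] using hholder

theorem eLpNorm_one_add_enorm_add_enorm_le [IsProbabilityMeasure P] {X Y : Ω → E} {q : ℝ≥0∞}
    (hq : 1 ≤ q) (hX : AEStronglyMeasurable X P) (hY : AEStronglyMeasurable Y P) :
    eLpNorm (fun ω => 1 + ‖X ω‖ₑ + ‖Y ω‖ₑ) q P ≤ 1 + eLpNorm X q P + eLpNorm Y q P := by
  have hone : eLpNorm (fun _ : Ω => (1 : ℝ≥0∞)) q P = 1 := by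
    rw [eLpNorm_const _ (zero_lt_one.trans_le hq).ne' (IsProbabilityMeasure.ne_zero P)]
    simp
  calc eLpNorm (fun ω => 1 + ‖X ω‖ₑ + ‖Y ω‖ₑ) q P
      ≤ eLpNorm (fun ω => 1 + ‖X ω‖ₑ) q P + eLpNorm (fun ω => ‖Y ω‖ₑ) q P :=
        eLpNorm_add_le (f := fun ω => 1 + ‖X ω‖ₑ) (g := fun ω => ‖Y ω‖ₑ)
          (hX.enorm.const_add 1).aestronglyMeasurable hY.enorm.aestronglyMeasurable hq
    _ ≤ eLpNorm (fun _ : Ω => (1 : ℝ≥0∞)) q P + eLpNorm (fun ω => ‖X ω‖ₑ) q P +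
          eLpNorm (fun ω => ‖Y ω‖ₑ) q P := by
        gcongr
        exact eLpNorm_add_le (f := fun _ => 1) (g := fun ω => ‖X ω‖ₑ)
          aestronglyMeasurable_const hX.enorm.aestronglyMeasurable hq
    _ = 1 + eLpNorm X q P + eLpNorm Y q P := by rw [hone, eLpNorm_enorm, eLpNorm_enorm]

variable [IsProbabilityMeasure P] {K : ℝ≥0} {h : E → F} {X Y : Ω → E}

theorem PolyLipschitzWith.lintegral_enorm_sub_le (hh : PolyLipschitzWith K (p - 1) h) (hp : 1 ≤ p)
    (hX : AEStronglyMeasurable X P) (hY : AEStronglyMeasurable Y P) :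
    ∫⁻ ω, ‖h (X ω) - h (Y ω)‖ₑ ∂P ≤
      K * (1 + eLpNorm X (.ofReal p) P + eLpNorm Y (.ofReal p) P) ^ (p - 1) *
        eLpNorm (X - Y) (.ofReal p) P := by
  set φ := fun ω => 1 + ‖X ω‖ₑ + ‖Y ω‖ₑ
  have hφ : AEMeasurable φ P := (hX.enorm.const_add 1).add hY.enorm
  have hp' : 0 ≤ p - 1 := sub_nonneg.2 hp
  calc ∫⁻ ω, ‖h (X ω) - h (Y ω)‖ₑ ∂P
      ≤ ∫⁻ ω, K * (φ ω ^ (p - 1) * ‖(X - Y) ω‖ₑ) ∂P := by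
        refine lintegral_mono fun ω => (hh.enorm_sub_le hp' _ _).trans_eq (mul_assoc _ _ _)
    _ = K * ∫⁻ ω, φ ω ^ (p - 1) * ‖(X - Y) ω‖ₑ ∂P := lintegral_const_mul' _ _ coe_ne_top
    _ ≤ K * (eLpNorm φ (.ofReal p) P ^ (p - 1) * eLpNorm (X - Y) (.ofReal p) P) := by
        rw [← eLpNorm_enorm (X - Y)]
        gcongr
        exact lintegral_rpow_sub_one_mul_le_eLpNorm hp hφ (hX.sub hY).enorm
    _ ≤ _ := by
        rw [mul_assoc]
        gcongr
        exact eLpNorm_one_add_enorm_add_enorm_le (one_le_ofReal.2 hp) hX hY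

theorem PolyLipschitzWith.integrable_comp (hh : PolyLipschitzWith K (p - 1) h) (hp : 1 ≤ p)
    (hX : MemLp X (.ofReal p) P) : Integrable (fun ω => h (X ω)) P := by
  have hbound := hh.lintegral_enorm_sub_le hp hX.1 (aestronglyMeasurable_const (b := (0 : E)))
  have hdiff : Integrable (fun ω => h (X ω) - h 0) P := by
    refine ⟨(hh.continuous.comp_aestronglyMeasurable hX.1).sub aestronglyMeasurable_const, ?_⟩
    refine hasFiniteIntegral_iff_enorm.2 (hbound.trans_lt ?_)
    have : 0 ≤ p - 1 := sub_nonneg.2 hp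
    have : eLpNorm X (.ofReal p) P < ⊤ := hX.2
    have hXY : eLpNorm (X - fun _ => 0) (.ofReal p) P = eLpNorm X (.ofReal p) P :=
      congrArg (eLpNorm · _ P) (sub_zero X)
    rw [hXY, eLpNorm_zero', add_zero]
    finiteness
  exact (hdiff.add (integrable_const (h 0))).congr (.of_forall fun ω => sub_add_cancel _ _)

variable [NormedSpace ℝ F] {M : ℝ≥0}

theorem PolyLipschitzWith.enorm_integral_comp_sub_le (hh : PolyLipschitzWith K (p - 1) h)
    (hp : 1 ≤ p) (hX : AEStronglyMeasurable X P) (hY : AEStronglyMeasurable Y P)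
    (hXM : eLpNorm X (.ofReal p) P ≤ M) (hYM : eLpNorm Y (.ofReal p) P ≤ M) :
    ‖∫ ω, h (X ω) ∂P - ∫ ω, h (Y ω) ∂P‖ₑ ≤
      ↑(K * (1 + 2 * M) ^ (p - 1)) * eLpNorm (X - Y) (.ofReal p) P := by
  have hp' : 0 ≤ p - 1 := sub_nonneg.2 hp
  rw [← integral_sub (hh.integrable_comp hp ⟨hX, hXM.trans_lt coe_lt_top⟩)
    (hh.integrable_comp hp ⟨hY, hYM.trans_lt coe_lt_top⟩)]
  calc ‖∫ ω, h (X ω) - h (Y ω) ∂P‖ₑ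
      ≤ ∫⁻ ω, ‖h (X ω) - h (Y ω)‖ₑ ∂P := enorm_integral_le_lintegral_enorm _
    _ ≤ K * (1 + M + M) ^ (p - 1) * eLpNorm (X - Y) (.ofReal p) P := by
        refine (hh.lintegral_enorm_sub_le hp hX hY).trans ?_
        gcongr
    _ = ↑(K * (1 + 2 * M) ^ (p - 1)) * eLpNorm (X - Y) (.ofReal p) P := by
        rw [coe_mul, coe_rpow_of_nonneg _ hp', two_mul, ← add_assoc]
        push_cast
        rfl

theorem PolyLipschitzWith.norm_integral_comp_le [CompleteSpace F]
    (hh : PolyLipschitzWith K (p - 1) h) (hp : 1 ≤ p) (hX : AEStronglyMeasurable X P)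
    (hXM : eLpNorm X (.ofReal p) P ≤ M) :
    ‖∫ ω, h (X ω) ∂P‖ ≤ ‖h 0‖ + K * (1 + 2 * M) ^ (p - 1) * M := by
  have hdiff : ‖∫ ω, h (X ω) ∂P - h 0‖ₑ ≤ ↑(K * (1 + 2 * M) ^ (p - 1)) * ↑M := by
    have := hh.enorm_integral_comp_sub_le hp hX (Y := 0) aestronglyMeasurable_zero hXM (by simp)
    simp only [Pi.zero_apply, integral_const, probReal_univ, one_smul, sub_zero] at this
    exact this.trans (by gcongr)
  have hdiff' : ‖∫ ω, h (X ω) ∂P - h 0‖ ≤ K * (1 + 2 * M) ^ (p - 1) * M := mod_cast hdiff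
  linarith [norm_le_norm_add_norm_sub' (∫ ω, h (X ω) ∂P) (h 0)]

end Coupling

section Wasserstein

/-- The couplings of `μ` and `ν`. -/
def couplings {α β : Type*} [MeasurableSpace α] [MeasurableSpace β] (μ : Measure α)
    (ν : Measure β) : Set (Measure (α × β)) :=
  {π | π.map Prod.fst = μ ∧ π.map Prod.snd = ν}

theorem prod_mem_couplings {α β : Type*} [MeasurableSpace α] [MeasurableSpace β] (μ : Measure α)
    (ν : Measure β) [IsProbabilityMeasure μ] [IsProbabilityMeasure ν] :
    μ.prod ν ∈ couplings μ ν :=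
  ⟨measurePreserving_fst.map_eq, measurePreserving_snd.map_eq⟩

variable {E F : Type*} [NormedAddCommGroup E] [MeasurableSpace E] {p : ℝ} {μ ν : Measure E}

/-- The extended Wasserstein-`p` distance. The distance `Wp` is its real part, with the junk value
`0` in place of `∞`. -/
def eWp (p : ℝ) (μ ν : Measure E) : ℝ≥0∞ :=
  ⨅ π : couplings μ ν, eLpNorm (Prod.fst - Prod.snd) (.ofReal p) π.1

theorem Wp_eq_toReal_eWp {d : ℕ} (hp : 0 < p) (μ ν : Measure (Rd d)) :
    Wp p μ ν = (eWp p μ ν).toReal := by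
  refine congrArg (fun S : Set ℝ≥0∞ => (sInf S).toReal) (Set.ext fun c => ?_)
  simp only [eLpNorm_ofReal_eq_lintegral_rpow_enorm hp, couplings, Set.mem_range, Subtype.exists,
    exists_prop, Set.mem_ofPred_eq, and_assoc, eq_comm (a := c)]
  rfl

variable [IsProbabilityMeasure μ] [IsProbabilityMeasure ν]

theorem eWp_ne_top (hμ : MemLp id (.ofReal p) μ) (hν : MemLp id (.ofReal p) ν) :
    eWp p μ ν ≠ ⊤ := by
  have hfst : MemLp Prod.fst (.ofReal p) (μ.prod ν) :=
    hμ.comp_measurePreserving measurePreserving_fst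
  have hsnd : MemLp Prod.snd (.ofReal p) (μ.prod ν) :=
    hν.comp_measurePreserving measurePreserving_snd
  exact ((iInf_le _ ⟨μ.prod ν, prod_mem_couplings μ ν⟩).trans_lt (hfst.sub hsnd).2).ne

variable [BorelSpace E] [SecondCountableTopology E] [NormedAddCommGroup F] [NormedSpace ℝ F]
  {K M : ℝ≥0} {h : E → F}

theorem PolyLipschitzWith.enorm_integral_sub_le_mul_eWp (hh : PolyLipschitzWith K (p - 1) h)
    (hp : 1 ≤ p) (hμ : eLpNorm id (.ofReal p) μ ≤ M) (hν : eLpNorm id (.ofReal p) ν ≤ M) :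
    ‖∫ x, h x ∂μ - ∫ x, h x ∂ν‖ₑ ≤ ↑(K * (1 + 2 * M) ^ (p - 1)) * eWp p μ ν := by
  have : Nonempty (couplings μ ν) := ⟨_, prod_mem_couplings μ ν⟩
  rw [eWp, mul_iInf fun htop => absurd htop coe_ne_top]
  refine le_iInf ?_
  rintro ⟨π, rfl, rfl⟩
  have hh_meas {ρ : Measure E} : AEStronglyMeasurable h ρ := hh.continuous.aestronglyMeasurable
  have := Measure.isProbabilityMeasure_of_map (μ := π) Prod.fst
  rw [eLpNorm_map_measure aestronglyMeasurable_id measurable_fst.aemeasurable] at hμ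
  rw [eLpNorm_map_measure aestronglyMeasurable_id measurable_snd.aemeasurable] at hν
  rw [integral_map measurable_fst.aemeasurable hh_meas,
    integral_map measurable_snd.aemeasurable hh_meas]
  exact hh.enorm_integral_comp_sub_le hp measurable_fst.aestronglyMeasurable
    measurable_snd.aestronglyMeasurable hμ hν

theorem PolyLipschitzWith.norm_integral_sub_le_mul_toReal_eWp
    (hh : PolyLipschitzWith K (p - 1) h) (hp : 1 ≤ p) (hμ : eLpNorm id (.ofReal p) μ ≤ M)
    (hν : eLpNorm id (.ofReal p) ν ≤ M) :
    ‖∫ x, h x ∂μ - ∫ x, h x ∂ν‖ ≤ K * (1 + 2 * M) ^ (p - 1) * (eWp p μ ν).toReal := by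
  have hfin : eWp p μ ν ≠ ⊤ := eWp_ne_top ⟨aestronglyMeasurable_id, hμ.trans_lt coe_lt_top⟩
    ⟨aestronglyMeasurable_id, hν.trans_lt coe_lt_top⟩
  have := toReal_mono (mul_ne_top coe_ne_top hfin) (hh.enorm_integral_sub_le_mul_eWp hp hμ hν)
  rwa [toReal_enorm, toReal_mul, coe_toReal] at this

theorem MomLE.eLpNorm_id_le {d : ℕ} {R : ℝ} {μ : Measure (Rd d)} (h : MomLE p R μ) (hp : 0 < p)
    (hR : 0 ≤ R) : eLpNorm id (.ofReal p) μ ≤ R.toNNReal := by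
  rw [eLpNorm_ofReal_eq_lintegral_rpow_enorm hp]
  calc (∫⁻ x, ‖id x‖ₑ ^ p ∂μ) ^ (1 / p) ≤ .ofReal (R ^ p) ^ (1 / p) := by gcongr; exact h
    _ = R.toNNReal := by
        rw [← ofReal_rpow_of_nonneg hR hp.le, ← ENNReal.rpow_mul, mul_one_div_cancel hp.ne',
          ENNReal.rpow_one, ENNReal.ofReal]

end Wasserstein

section Normalization

variable {E : Type*} [NormedAddCommGroup E] [MeasurableSpace E] [BorelSpace E]

theorem half_le_measureReal_closedBall [SecondCountableTopology E] {μ : Measure E}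
    [IsProbabilityMeasure μ] {q : ℝ≥0∞} {M : ℝ≥0} (hq : 1 ≤ q) (hμ : eLpNorm id q μ ≤ M) :
    1 / 2 ≤ μ.real (Metric.closedBall 0 (2 * M + 1)) := by
  have hmoment : ∫⁻ x, ‖x‖ₑ ∂μ ≤ M :=
    eLpNorm_one_eq_lintegral_enorm.symm.trans_le <|
      (eLpNorm_le_eLpNorm_of_exponent_le hq aestronglyMeasurable_id).trans hμ
  have hmarkov : (2 * M + 1) * μ.real {x | 2 * M + 1 ≤ ‖x‖₊} ≤ (M : ℝ) := by
    have := toReal_mono coe_ne_top <|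
      (mul_meas_ge_le_lintegral measurable_enorm ↑(2 * M + 1)).trans hmoment
    simpa only [measureReal_def, enorm_eq_nnnorm, coe_le_coe, toReal_mul, coe_toReal,
      NNReal.coe_add, NNReal.coe_mul, NNReal.coe_ofNat, NNReal.coe_one] using this
  have hcompl : μ.real (Metric.closedBall 0 (2 * M + 1))ᶜ ≤ μ.real {x | 2 * M + 1 ≤ ‖x‖₊} := by
    refine measureReal_mono fun x hx => ?_
    rw [Set.mem_compl_iff, mem_closedBall_zero_iff, not_le] at hx
    exact_mod_cast hx.le
  rw [probReal_compl_eq_one_sub Metric.isClosed_closedBall.measurableSet] at hcompl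
  nlinarith [M.2]

theorem exists_pos_le_integral_of_eLpNorm_id_le [ProperSpace E] {w : E → ℝ} (hw : Continuous w)
    (hw_pos : ∀ x, 0 < w x) {q : ℝ≥0∞} (hq : 1 ≤ q) (M : ℝ≥0) :
    ∃ c > 0, ∀ μ : Measure E, IsProbabilityMeasure μ → eLpNorm id q μ ≤ M → Integrable w μ →
      c ≤ ∫ x, w x ∂μ := by
  set B := Metric.closedBall (0 : E) (2 * M + 1)
  obtain ⟨x₀, -, hx₀⟩ := (isCompact_closedBall (0 : E) (2 * M + 1)).exists_isMinOn
    (Metric.nonempty_closedBall.2 (by positivity)) hw.continuousOn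
  refine ⟨w x₀ * (1 / 2), mul_pos (hw_pos x₀) one_half_pos, fun μ _ hμ hint => ?_⟩
  calc w x₀ * (1 / 2) ≤ w x₀ * μ.real B := by
        gcongr
        · exact (hw_pos x₀).le
        · exact half_le_measureReal_closedBall hq hμ
    _ ≤ w x₀ * μ.real {x | w x₀ ≤ w x} := by
        gcongr
        · exact (hw_pos x₀).le
        · exact measure_ne_top _ _
        · exact fun x hx => hx₀ hx
    _ ≤ ∫ x, w x ∂μ :=
        mul_meas_ge_le_integral_of_nonneg (.of_forall fun x => (hw_pos x).le) hint _

end Normalization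

section Tilted

theorem abs_div_sub_div_le {a a' b b' c A ε : ℝ} (hc : 0 < c) (hb : c ≤ b) (hb' : c ≤ b')
    (ha' : |a'| ≤ A) (ha_sub : |a - a'| ≤ ε) (hb_sub : |b - b'| ≤ ε) :
    |a / b - a' / b'| ≤ (1 + A / c) / c * ε := by
  have hb0 : 0 < b := hc.trans_le hb
  have hb'0 : 0 < b' := hc.trans_le hb'
  have hε : 0 ≤ ε := (abs_nonneg _).trans ha_sub
  have hA : 0 ≤ A := (abs_nonneg _).trans ha'
  calc |a / b - a' / b'| = |(a - a') / b - a' / b' * ((b - b') / b)| := by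
        congr 1; field_simp; ring
    _ ≤ |a - a'| / b + |a'| / b' * (|b - b'| / b) := by
        refine (abs_sub _ _).trans_eq ?_
        rw [abs_mul, abs_div, abs_div, abs_div, abs_of_pos hb0, abs_of_pos hb'0]
    _ ≤ ε / c + A / c * (ε / c) := by gcongr
    _ = (1 + A / c) / c * ε := by ring

theorem integral_tilted_eq_div {Ω : Type*} [MeasurableSpace Ω] (μ : Measure Ω) (φ g : Ω → ℝ) :
    ∫ x, g x ∂μ.tilted φ = (∫ x, exp (φ x) * g x ∂μ) / ∫ x, exp (φ x) ∂μ := by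
  simp_rw [integral_tilted, smul_eq_mul, div_mul_eq_mul_div, integral_div]

variable {E : Type*} [NormedAddCommGroup E] [MeasurableSpace E] {K : ℝ≥0} {p : ℝ} {φ g : E → ℝ}

theorem PolyLipschitzWith.integrable_tilted {μ : Measure E} [IsProbabilityMeasure μ]
    (hφ : PolyLipschitzWith K (p - 1) fun x => exp (φ x))
    (hg : PolyLipschitzWith K (p - 1) fun x => exp (φ x) * g x) (hp : 1 ≤ p)
    (hμ : MemLp id (.ofReal p) μ) : Integrable g (μ.tilted φ) :=
  (integrable_tilted_iff (hφ.integrable_comp hp hμ) g).2 (hg.integrable_comp hp hμ)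

theorem PolyLipschitzWith.exists_abs_integral_tilted_sub_le [BorelSpace E] [ProperSpace E]
    (hφ : PolyLipschitzWith K (p - 1) fun x => exp (φ x)) (hp : 1 ≤ p) (M : ℝ≥0) :
    ∃ C, 0 ≤ C ∧ ∀ μ ν : Measure E, IsProbabilityMeasure μ → IsProbabilityMeasure ν →
      eLpNorm id (.ofReal p) μ ≤ M → eLpNorm id (.ofReal p) ν ≤ M →
      ∀ g : E → ℝ, PolyLipschitzWith K (p - 1) (fun x => exp (φ x) * g x) → |g 0| ≤ 1 →
        |∫ x, g x ∂ν.tilted φ| ≤ C ∧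
        |∫ x, g x ∂μ.tilted φ - ∫ x, g x ∂ν.tilted φ| ≤ C * (eWp p μ ν).toReal := by
  obtain ⟨c, hc, hc_le⟩ := exists_pos_le_integral_of_eLpNorm_id_le hφ.continuous
    (fun x => Real.exp_pos (φ x)) (one_le_ofReal.2 hp) M
  set Λ : ℝ := K * (1 + 2 * M) ^ (p - 1)
  set A : ℝ := exp (φ 0) + Λ * M
  refine ⟨A / c + (1 + A / c) / c * Λ, by positivity, fun μ ν _ _ hμ hν g hg hg0 => ?_⟩
  have hlower {ρ : Measure E} [IsProbabilityMeasure ρ] (hρ : eLpNorm id (.ofReal p) ρ ≤ M) :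
      c ≤ ∫ x, exp (φ x) ∂ρ :=
    hc_le ρ ‹_› hρ (hφ.integrable_comp hp ⟨aestronglyMeasurable_id, hρ.trans_lt coe_lt_top⟩)
  have hnum : |∫ x, exp (φ x) * g x ∂ν| ≤ A :=
    calc |∫ x, exp (φ x) * g x ∂ν| ≤ |exp (φ 0) * g 0| + Λ * M :=
          hg.norm_integral_comp_le hp aestronglyMeasurable_id hν
      _ ≤ A := by
          rw [abs_mul, Real.abs_exp]
          exact add_le_add_left (mul_le_of_le_one_right (Real.exp_pos _).le hg0) _
  have hquot := abs_div_sub_div_le hc (hlower hμ) (hlower hν) hnum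
    (hg.norm_integral_sub_le_mul_toReal_eWp hp hμ hν)
    (hφ.norm_integral_sub_le_mul_toReal_eWp hp hμ hν)
  simp only [integral_tilted_eq_div]
  constructor
  · rw [abs_div, abs_of_pos (hc.trans_le (hlower hν))]
    refine (div_le_div₀ (by positivity) hnum hc (hlower hν)).trans ?_
    exact le_add_of_nonneg_right (by positivity)
  · refine (hquot.trans_eq (mul_assoc _ _ _).symm).trans ?_
    gcongr
    exact le_add_of_nonneg_left (by positivity)

end Tilted

section Covariance

variable {Ω : Type*} [MeasurableSpace Ω] {P Q : Measure Ω}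

theorem abs_covariance_sub_le [IsProbabilityMeasure P] [IsProbabilityMeasure Q] {X Y : Ω → ℝ}
    (hXP : MemLp X 2 P) (hYP : MemLp Y 2 P) (hXQ : MemLp X 2 Q) (hYQ : MemLp Y 2 Q) {C ε : ℝ}
    (hX : |∫ ω, X ω ∂P| ≤ C) (hY : |∫ ω, Y ω ∂Q| ≤ C)
    (hX_sub : |∫ ω, X ω ∂P - ∫ ω, X ω ∂Q| ≤ ε) (hY_sub : |∫ ω, Y ω ∂P - ∫ ω, Y ω ∂Q| ≤ ε)
    (hXY_sub : |∫ ω, X ω * Y ω ∂P - ∫ ω, X ω * Y ω ∂Q| ≤ ε) :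
    |cov[X, Y; P] - cov[X, Y; Q]| ≤ (1 + 2 * C) * ε := by
  have hC : 0 ≤ C := (abs_nonneg _).trans hX
  rw [ProbabilityTheory.covariance_eq_sub hXP hYP, ProbabilityTheory.covariance_eq_sub hXQ hYQ]
  simp only [Pi.mul_apply]
  set x := ∫ ω, X ω ∂P
  set x' := ∫ ω, X ω ∂Q
  set y := ∫ ω, Y ω ∂P
  set y' := ∫ ω, Y ω ∂Q
  calc |∫ ω, X ω * Y ω ∂P - x * y - (∫ ω, X ω * Y ω ∂Q - x' * y')|
      = |(∫ ω, X ω * Y ω ∂P - ∫ ω, X ω * Y ω ∂Q) - x * (y - y') - (x - x') * y'| := by ring_nf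
    _ ≤ |∫ ω, X ω * Y ω ∂P - ∫ ω, X ω * Y ω ∂Q| + |x| * |y - y'| + |x - x'| * |y'| := by
        rw [← abs_mul, ← abs_mul]
        exact (abs_sub _ _).trans (add_le_add_left (abs_sub _ _) _)
    _ ≤ ε + C * ε + ε * C := by gcongr; exact (abs_nonneg _).trans hX_sub
    _ = (1 + 2 * C) * ε := by ring

theorem frobNorm_le {m n : ℕ} {A : Matrix (Fin m) (Fin n) ℝ} {ε : ℝ} (hε : 0 ≤ ε)
    (hA : ∀ i j, |A i j| ≤ ε) : frobNorm A ≤ √(m * n) * ε := by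
  rw [frobNorm, ← Real.sqrt_sq hε, ← Real.sqrt_mul (by positivity)]
  refine Real.sqrt_le_sqrt ?_
  calc ∑ i, ∑ j, A i j ^ 2 ≤ ∑ _i : Fin m, ∑ _j : Fin n, ε ^ 2 :=
        Finset.sum_le_sum fun i _ => Finset.sum_le_sum fun j _ => sq_le_sq'
          (neg_le_of_abs_le (hA i j)) (le_of_abs_le (hA i j))
    _ = m * n * ε ^ 2 := by simp [mul_assoc]

theorem wMean_eq_integral_tilted (β : ℝ) {d : ℕ} (f : Rd d → ℝ) (μ : Measure (Rd d)) :
    wMean β f μ = ∫ x, x ∂μ.tilted fun x => -β * f x := by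
  simp_rw [integral_tilted, wMean, wFn, div_eq_inv_mul, mul_smul, integral_smul]

theorem wCov_eq_covariance_tilted (β : ℝ) {d : ℕ} (f : Rd d → ℝ) (μ : Measure (Rd d))
    (hint : ∀ i, Integrable (fun x : Rd d => x i) (μ.tilted fun x => -β * f x)) (i j : Fin d) :
    wCov β f μ i j = cov[fun x => x i, fun x => x j; μ.tilted fun x => -β * f x] := by
  rw [wCov, ProbabilityTheory.covariance, integral_tilted_eq_div, wMean_eq_integral_tilted,
    eval_integral_piLp hint, eval_integral_piLp hint, ← div_eq_inv_mul]
  rfl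

end Covariance

section WeightedCovariance

variable {d : ℕ} {β s : ℝ} {f : Rd d → ℝ}

theorem ClassA.exists_wFn_mul_rpow_le {ℓ u p : ℝ} (hf : ClassA s ℓ u f) (hβ : 0 < β) (hs : 0 ≤ s)
    (hℓ : 0 ≤ ℓ) (hp : pC s ℓ ≤ p) :
    ∃ B : ℝ≥0, ∀ x, wFn β f x * (1 + ‖x‖) ^ (s + 2) ≤ B * (1 + ‖x‖) ^ (p - 1) := by
  rcases hℓ.eq_or_lt with rfl | hℓ
  · rw [pC, if_pos rfl] at hp
    refine ⟨⟨exp (-β * fStar f), (Real.exp_pos _).le⟩, fun x => ?_⟩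
    have hmin : fStar f ≤ f x := csInf_le hf.bddBelow ⟨x, rfl⟩
    refine mul_le_mul (Real.exp_le_exp.2 ?_) (Real.rpow_le_rpow_of_exponent_le ?_ (by linarith))
      (by positivity) (Real.exp_pos _).le
    · nlinarith
    · linarith [norm_nonneg x]
  · rw [pC, if_neg hℓ.ne'] at hp
    obtain ⟨cl, hcl, Cl, -, hgrowth⟩ := hf.growth_lower
    obtain ⟨C, hC, hdecay⟩ :=
      exists_one_add_rpow_le_mul_exp_rpow (mul_pos hβ hcl) hℓ (by linarith : 0 < s + 2)
    refine ⟨⟨exp (-β * (fStar f - Cl)) * C, by positivity⟩, fun x => ?_⟩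
    have hw : wFn β f x ≤ exp (-β * (fStar f - Cl)) * exp (-(β * cl * ‖x‖ ^ ℓ)) := by
      rw [wFn, ← Real.exp_add, Real.exp_le_exp]
      nlinarith [hgrowth x]
    calc wFn β f x * (1 + ‖x‖) ^ (s + 2)
        ≤ exp (-β * (fStar f - Cl)) * exp (-(β * cl * ‖x‖ ^ ℓ)) *
            (C * exp (β * cl * ‖x‖ ^ ℓ)) := by
          gcongr
          exact hdecay _ (norm_nonneg x)
      _ = exp (-β * (fStar f - Cl)) * C := by
          rw [Real.exp_neg]; field_simp
      _ ≤ exp (-β * (fStar f - Cl)) * C * (1 + ‖x‖) ^ (p - 1) :=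
          le_mul_of_one_le_right (by positivity)
            (Real.one_le_rpow (by linarith [norm_nonneg x]) (by linarith))

variable {L B : ℝ≥0} {p : ℝ}

theorem PolyLipschitzWith.wFn_mul {g : Rd d → ℝ} (hf : PolyLipschitzWith L s f) (hs : 0 ≤ s)
    (hp : 1 ≤ p) (hB : ∀ x, wFn β f x * (1 + ‖x‖) ^ (s + 2) ≤ B * (1 + ‖x‖) ^ (p - 1))
    (hg : HasPolyGrowth 2 g) :
    PolyLipschitzWith ((‖-β‖₊ * L + 1) * 2 ^ (s + 2) * (2 * B)) (p - 1) fun x => wFn β f x * g x :=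
  (hf.const_mul (-β)).exp_mul hg hs zero_le_two (sub_nonneg.2 hp) hB

theorem PolyLipschitzWith.weight (hf : PolyLipschitzWith L s f) (hs : 0 ≤ s) (hp : 1 ≤ p)
    (hB : ∀ x, wFn β f x * (1 + ‖x‖) ^ (s + 2) ≤ B * (1 + ‖x‖) ^ (p - 1)) :
    PolyLipschitzWith ((‖-β‖₊ * L + 1) * 2 ^ (s + 2) * (2 * B)) (p - 1) (wFn β f) := by
  simpa only [mul_one] using hf.wFn_mul hs hp hB (hasPolyGrowth_one.mono zero_le_two)

theorem PolyLipschitzWith.memLp_coord_tilted (hf : PolyLipschitzWith L s f) (hs : 0 ≤ s)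
    (hp : 1 ≤ p) (hB : ∀ x, wFn β f x * (1 + ‖x‖) ^ (s + 2) ≤ B * (1 + ‖x‖) ^ (p - 1))
    {μ : Measure (Rd d)} [IsProbabilityMeasure μ] (hμ : MemLp id (.ofReal p) μ) (i : Fin d) :
    MemLp (fun x => x i) 2 (μ.tilted fun x => -β * f x) := by
  refine (memLp_two_iff_integrable_sq (by fun_prop)).2 ?_
  simp only [sq]
  exact (hf.weight hs hp hB).integrable_tilted
    (hf.wFn_mul hs hp hB (hasPolyGrowth_coord_mul_coord i i)) hp hμ

theorem PolyLipschitzWith.exists_abs_wCov_sub_le (hf : PolyLipschitzWith L s f) (hs : 0 ≤ s)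
    (hp : 1 ≤ p) (hB : ∀ x, wFn β f x * (1 + ‖x‖) ^ (s + 2) ≤ B * (1 + ‖x‖) ^ (p - 1))
    (M : ℝ≥0) :
    ∃ C, 0 ≤ C ∧ ∀ μ ν : Measure (Rd d), IsProbabilityMeasure μ → IsProbabilityMeasure ν →
      eLpNorm id (.ofReal p) μ ≤ M → eLpNorm id (.ofReal p) ν ≤ M →
      ∀ i j, |wCov β f μ i j - wCov β f ν i j| ≤ C * (eWp p μ ν).toReal := by
  have hweight := hf.weight hs hp hB
  obtain ⟨C, hC, hbound⟩ := hweight.exists_abs_integral_tilted_sub_le hp M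
  refine ⟨(1 + 2 * C) * C, by positivity, fun μ ν _ _ hμ hν i j => ?_⟩
  have hcoord (i : Fin d) := (hasPolyGrowth_coord i).mono one_le_two
  have htest {g : Rd d → ℝ} (hg : HasPolyGrowth 2 g) {ν : Measure (Rd d)} [IsProbabilityMeasure ν]
      (hν : eLpNorm id (.ofReal p) ν ≤ M) :=
    hbound μ ν ‹_› ‹_› hμ hν g (hf.wFn_mul hs hp hB hg) (by simpa using hg.abs_le 0)
  have hmemLp {ρ : Measure (Rd d)} [IsProbabilityMeasure ρ] (hρ : eLpNorm id (.ofReal p) ρ ≤ M) :=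
    hf.memLp_coord_tilted hs hp hB ⟨aestronglyMeasurable_id, hρ.trans_lt coe_lt_top⟩
  have htilted {ρ : Measure (Rd d)} [IsProbabilityMeasure ρ]
      (hρ : eLpNorm id (.ofReal p) ρ ≤ M) : IsProbabilityMeasure (ρ.tilted fun x => -β * f x) :=
    isProbabilityMeasure_tilted <|
      hweight.integrable_comp hp ⟨aestronglyMeasurable_id, hρ.trans_lt coe_lt_top⟩
  have := htilted hμ
  have := htilted hν
  rw [wCov_eq_covariance_tilted β f μ fun i => (hmemLp hμ i).integrable one_le_two,
    wCov_eq_covariance_tilted β f ν fun i => (hmemLp hν i).integrable one_le_two, mul_assoc]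
  exact abs_covariance_sub_le (hmemLp hμ i) (hmemLp hμ j) (hmemLp hν i) (hmemLp hν j)
    (htest (hcoord i) hμ).1 (htest (hcoord j) hν).1 (htest (hcoord i) hν).2
    (htest (hcoord j) hν).2 (htest (hasPolyGrowth_coord_mul_coord i j) hν).2

end WeightedCovariance

theorem weighted_cov_stability_general (β : ℝ) {d : ℕ} {s p R : ℝ} (hs : 0 ≤ s) (hp : 1 ≤ p)
    (hR : 0 ≤ R) {f : Rd d → ℝ} {Lf B : ℝ≥0} (hf : PolyLipschitzWith Lf s f)
    (hB : ∀ x, wFn β f x * (1 + ‖x‖) ^ (s + 2) ≤ B * (1 + ‖x‖) ^ (p - 1)) :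
    ∃ L > 0, ∀ μ ν : Measure (Rd d),
      IsProbabilityMeasure μ → IsProbabilityMeasure ν →
      MomLE p R μ → MomLE p R ν →
      frobNorm (wCov β f μ - wCov β f ν) ≤ L * Wp p μ ν := by
  have hp0 : 0 < p := by linarith
  obtain ⟨C, hC, hentry⟩ := hf.exists_abs_wCov_sub_le hs hp hB R.toNNReal
  refine ⟨√(d * d) * C + 1, by positivity, fun μ ν _ _ hμ hν => ?_⟩
  rw [Wp_eq_toReal_eWp hp0]
  calc frobNorm (wCov β f μ - wCov β f ν) ≤ √(d * d) * (C * (eWp p μ ν).toReal) :=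
        frobNorm_le (by positivity)
          (hentry μ ν ‹_› ‹_› (hμ.eLpNorm_id_le hp0 hR) (hν.eLpNorm_id_le hp0 hR))
    _ = √(d * d) * C * (eWp p μ ν).toReal := (mul_assoc _ _ _).symm
    _ ≤ (√(d * d) * C + 1) * (eWp p μ ν).toReal := by
        gcongr
        exact le_add_of_nonneg_right zero_le_one

/-- **Basic Wasserstein stability estimate for the weighted covariance.**
If `f ∈ A(s, ℓ, u)`, then for every `R > 0` and `p ≥ p_C(s, ℓ)` there is `L_C > 0`
such that `‖C_β(μ) - C_β(ν)‖_F ≤ L_C ⬝ W_p(μ, ν)` for all `μ, ν ∈ P_{p,R}(ℝ^d)`. -/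
theorem weighted_cov_stability
    (β : ℝ) (hβ : 0 < β) (d : ℕ) (hd : 1 ≤ d)
    (s ℓ u : ℝ) (hs : 0 ≤ s) (hℓ : 0 ≤ ℓ) (hℓu : ℓ ≤ u)
    (f : Rd d → ℝ) (hf : ClassA s ℓ u f)
    (R : ℝ) (hR : 0 < R) (p : ℝ) (hp : pC s ℓ ≤ p) :
    ∃ L > 0, ∀ μ ν : Measure (Rd d),
      IsProbabilityMeasure μ → IsProbabilityMeasure ν →
      MomLE p R μ → MomLE p R ν →
      frobNorm (wCov β f μ - wCov β f ν) ≤ L * Wp p μ ν := by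
  obtain ⟨Lf, hLf, hlip⟩ := hf.lip
  obtain ⟨B, hB⟩ := hf.exists_wFn_mul_rpow_le hβ hs hℓ hp
  have hp_one : 1 ≤ p := le_trans (by unfold pC; split_ifs <;> linarith) hp
  exact weighted_cov_stability_general β (Lf := ⟨Lf, hLf.le⟩) hs hp_one hR.le hlip hB

end
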